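/- Let Σ ⊆ ℂ be open, H ≠ 0 a real constant, u : Σ → ℝ and Q : Σ → ℂ smooth, and let F̂ : Σ × (ℂ\{0}) → SL(2,ℂ) be smooth in z, holomorphic in λ, with F̂(z,λ) ∈ SU(2) for |λ| = 1, satisfying F̂⁻¹ ∂_z F̂ = Û(λ) and F̂⁻¹ ∂_{z̄} F̂ = V̂(λ), where Û(λ) = (1/2)[[u_z, -2H e^u λ⁻¹],[Q e^{-u} λ⁻¹, -u_z]] and V̂(λ) = (1/2)[[-u_{z̄}, -Q̄ e^{-u} λ],[2H e^u λ, u_{z̄}]]. Then for every λ₀ with |λ₀| = 1, the map f^{λ₀}(z) := S_{λ₀}(F̂(z,·)) is a conformal immersion Σ → su(2) with conformal factor e^u, constant mean curvature H, and Hopf differential coefficient λ₀⁻² Q. -/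

import Mathlib

open Matrix Complex

noncomputable section

attribute [local instance] Matrix.linftyOpNormedAddCommGroup Matrix.linftyOpNormedSpace
  Matrix.linftyOpNormedRing Matrix.linftyOpNormedAlgebra

/-- The space of 2×2 complex matrices. -/
abbrev M2 : Type := Matrix (Fin 2) (Fin 2) ℂ

/-- Basis vector `e₁` of su(2). -/
def e1 : M2 := !![0, -Complex.I; -Complex.I, 0]

/-- Basis vector `e₂` of su(2). -/
def e2 : M2 := !![0, 1; -1, 0]

/-- Basis vector `e₃` of su(2). -/
def e3 : M2 := !![Complex.I, 0; 0, -Complex.I]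

/-- The inner product `⟨X,Y⟩ = -(1/2) tr (XY)` identifying su(2) with E³. -/
def ip (X Y : M2) : ℂ := -(1/2 : ℂ) * (X * Y).trace

/-- Partial derivative in the `x`-direction. -/
def px (f : ℂ → M2) (z : ℂ) : M2 := fderiv ℝ f z 1

/-- Partial derivative in the `y`-direction. -/
def py (f : ℂ → M2) (z : ℂ) : M2 := fderiv ℝ f z Complex.I

/-- Wirtinger derivative `∂_z = (1/2)(∂_x - i ∂_y)`. -/
def dz (f : ℂ → M2) (z : ℂ) : M2 := (2:ℂ)⁻¹ • (px f z - Complex.I • py f z)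

/-- Wirtinger derivative `∂_z̄ = (1/2)(∂_x + i ∂_y)`. -/
def dzb (f : ℂ → M2) (z : ℂ) : M2 := (2:ℂ)⁻¹ • (px f z + Complex.I • py f z)

/-- `x`-derivative of a real-valued function on ℂ. -/
def pxR (u : ℂ → ℝ) (z : ℂ) : ℝ := fderiv ℝ u z 1

/-- `y`-derivative of a real-valued function on ℂ. -/
def pyR (u : ℂ → ℝ) (z : ℂ) : ℝ := fderiv ℝ u z Complex.I

/-- Wirtinger derivative `u_z` of a real-valued function. -/
def dzR (u : ℂ → ℝ) (z : ℂ) : ℂ := (2:ℂ)⁻¹ * ((pxR u z : ℂ) - Complex.I * (pyR u z : ℂ))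

/-- Wirtinger derivative `u_z̄` of a real-valued function. -/
def dzbR (u : ℂ → ℝ) (z : ℂ) : ℂ := (2:ℂ)⁻¹ * ((pxR u z : ℂ) + Complex.I * (pyR u z : ℂ))

/-- `x`-derivative of a complex-valued function on ℂ. -/
def pxC (q : ℂ → ℂ) (z : ℂ) : ℂ := fderiv ℝ q z 1

/-- `y`-derivative of a complex-valued function on ℂ. -/
def pyC (q : ℂ → ℂ) (z : ℂ) : ℂ := fderiv ℝ q z Complex.I

/-- Wirtinger derivative `∂_z` of a complex-valued function. -/
def dzC (q : ℂ → ℂ) (z : ℂ) : ℂ := (2:ℂ)⁻¹ * (pxC q z - Complex.I * pyC q z)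

/-- Wirtinger derivative `∂_z̄` of a complex-valued function. -/
def dzbC (q : ℂ → ℂ) (z : ℂ) : ℂ := (2:ℂ)⁻¹ * (pxC q z + Complex.I * pyC q z)

/-- The Sym–Bobenko formula `S_{λ₀}(G) = -(1/(2H)) (G e₃ G⁻¹ + 2iλ ∂_λ G · G⁻¹)` at `λ = λ₀`. -/
def symB (H : ℝ) (G : ℂ → M2) (l : ℂ) : M2 :=
  (-(2 * (H : ℂ))⁻¹) • (G l * e3 * (G l)⁻¹ + (2 * Complex.I * l) • (fderiv ℂ G l 1 * (G l)⁻¹))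

/-! The Maurer–Cartan form `α = F̂⁻¹ dF̂` is a Laurent polynomial in `λ`, and exchanging `d` with
`∂_λ` shows that the Sym–Bobenko map `f` has differential
`df = -(2H)⁻¹ F̂ ([α, e₃] + 2iλ ∂_λ α) F̂⁻¹`. In the bracket all terms with `Q` cancel, leaving
`df(v) = e^u F̂ K(v) F̂⁻¹` with `K(v)` orthogonal to `e₃` and independent of `z`. Hence
`N = F̂ e₃ F̂⁻¹` is normal to `f`, the first fundamental form is that of `e^u K`, and one more
derivative gives the second one as `⟨[α(w), e^u K(v)], e₃⟩`, which contains `H` and `λ⁻² Q`.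
Rotating `F̂` by `diag(s, s⁻¹)` with `s² = λ⁻¹` takes `e₁`, `e₂` to the directions of `f_x`, `f_y`.

That `f` takes values in `su(2)` is pointwise in `z`: differentiating `F̂ F̂* = 1` along the unit
circle makes `iλ ∂_λ F̂ · F̂⁻¹` skew-Hermitian, and the Jacobi formula for `det F̂ = 1` makes
it trace-free. -/

open Topology Ring ComplexConjugate

section RingInverse

variable {𝕜 E R : Type*} [NontriviallyNormedField 𝕜] [NormedAddCommGroup E] [NormedSpace 𝕜 E]
  [NormedRing R] [NormedAlgebra 𝕜 R] [HasSummableGeomSeries R]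

lemma fderiv_mul_ringInverse_apply {D F : E → R} {x v : E} {W : R}
    (hD : DifferentiableAt 𝕜 D x) (hF : DifferentiableAt 𝕜 F x) (hunit : IsUnit (F x))
    (hW : fderiv 𝕜 F x v = F x * W) :
    fderiv 𝕜 (fun y => D y * (F y)⁻¹ʳ) x v = (fderiv 𝕜 D x v - D x * W) * (F x)⁻¹ʳ := by
  obtain ⟨U, hU⟩ := hunit
  have hinv : HasFDerivAt (fun y => (F y)⁻¹ʳ)
      ((-ContinuousLinearMap.mulLeftRight 𝕜 R ↑U⁻¹ ↑U⁻¹).comp (fderiv 𝕜 F x)) x :=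
    (hU ▸ hasFDerivAt_ringInverse U).comp x hF.hasFDerivAt
  rw [(hD.hasFDerivAt.fun_mul' hinv).fderiv]
  simp only [← hU, inverse_invertible, invOf_units, _root_.add_apply, _root_.smul_apply,
    ContinuousLinearMap.comp_apply, _root_.neg_apply, ContinuousLinearMap.mulLeftRight_apply, hW,
    Units.inv_mul_cancel_left, smul_eq_mul, mul_neg, MulOpposite.smul_eq_mul_unop,
    MulOpposite.unop_op, sub_mul, mul_assoc]
  abel

lemma fderiv_conj_ringInverse_apply {A F : E → R} {x v : E} {W : R}
    (hA : DifferentiableAt 𝕜 A x) (hF : DifferentiableAt 𝕜 F x) (hunit : IsUnit (F x))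
    (hW : fderiv 𝕜 F x v = F x * W) :
    fderiv 𝕜 (fun y => F y * A y * (F y)⁻¹ʳ) x v
      = F x * (W * A x - A x * W + fderiv 𝕜 A x v) * (F x)⁻¹ʳ := by
  rw [fderiv_mul_ringInverse_apply (hF.fun_mul hA) hF hunit hW, fderiv_fun_mul' hF hA]
  simp only [_root_.add_apply, _root_.smul_apply, smul_eq_mul, MulOpposite.smul_eq_mul_unop,
    MulOpposite.unop_op, hW]
  noncomm_ring

lemma contDiffOn_ringInverse_comp [CompleteSpace R] {F : E → R} {s : Set E} {n : WithTop ℕ∞}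
    (hF : ContDiffOn 𝕜 n F s) (hunit : ∀ x ∈ s, IsUnit (F x)) :
    ContDiffOn 𝕜 n (fun x => (F x)⁻¹ʳ) s := fun x hx => by
  obtain ⟨U, hU⟩ := hunit x hx
  exact (hU ▸ contDiffAt_ringInverse 𝕜 U).comp_contDiffWithinAt x (hF x hx)

end RingInverse

section LogarithmicDerivative

variable {E R : Type*} [NormedAddCommGroup E] [NormedSpace ℝ E] [NormedRing R] [NormedAlgebra ℂ R]
  [HasSummableGeomSeries R]

lemma fderiv_conj_add_smul_mul_ringInverse_apply {F D : E → R} {x v : E} {W W' : R}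
    (hF : DifferentiableAt ℝ F x) (hD : DifferentiableAt ℝ D x) (hunit : IsUnit (F x))
    (hW : fderiv ℝ F x v = F x * W) (hW' : fderiv ℝ D x v = D x * W + F x * W') (a : R) (b c : ℂ) :
    fderiv ℝ (fun y => c • (F y * a * (F y)⁻¹ʳ + b • (D y * (F y)⁻¹ʳ))) x v
      = F x * (c • (W * a - a * W + b • W')) * (F x)⁻¹ʳ := by
  have hinv : DifferentiableAt ℝ (fun y => (F y)⁻¹ʳ) x := hF.inverse hunit
  have hconj : DifferentiableAt ℝ (fun y => F y * a * (F y)⁻¹ʳ) x := (hF.mul_const a).fun_mul hinv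
  have hlog : DifferentiableAt ℝ (fun y => D y * (F y)⁻¹ʳ) x := hD.fun_mul hinv
  rw [((hconj.hasFDerivAt.fun_add (hlog.hasFDerivAt.fun_const_smul b)).fun_const_smul c).fderiv]
  simp only [_root_.add_apply, _root_.smul_apply]
  rw [fderiv_conj_ringInverse_apply (differentiableAt_const a) hF hunit hW,
    fderiv_mul_ringInverse_apply hD hF hunit hW, hW', fderiv_fun_const]
  simp [mul_add, add_mul]

lemma fderiv_conj_smul_ringInverse_apply {F : E → R} {c : E → ℂ} {x v : E} {W : R}
    (hc : DifferentiableAt ℝ c x) (hF : DifferentiableAt ℝ F x) (hunit : IsUnit (F x))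
    (hW : fderiv ℝ F x v = F x * W) (a : R) :
    fderiv ℝ (fun y => F y * (c y • a) * (F y)⁻¹ʳ) x v
      = F x * (c x • (W * a - a * W) + fderiv ℝ c x v • a) * (F x)⁻¹ʳ := by
  rw [fderiv_conj_ringInverse_apply (hc.smul_const a) hF hunit hW, fderiv_smul_const hc a,
    ContinuousLinearMap.smulRight_apply, mul_smul_comm, smul_mul_assoc, smul_sub]

end LogarithmicDerivative

section PartialDerivatives

variable {𝕜 E₁ E₂ G : Type*} [NontriviallyNormedField 𝕜]
  [NormedAddCommGroup E₁] [NormedSpace 𝕜 E₁] [NormedAddCommGroup E₂] [NormedSpace 𝕜 E₂]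
  [NormedAddCommGroup G] [NormedSpace 𝕜 G] {Φ : E₁ → E₂ → G} {x : E₁} {y : E₂}

lemma fderiv_partial_left_apply
    (h : DifferentiableAt 𝕜 (fun p : E₁ × E₂ => Φ p.1 p.2) (x, y)) (v : E₁) :
    fderiv 𝕜 (fun x' => Φ x' y) x v = fderiv 𝕜 (fun p : E₁ × E₂ => Φ p.1 p.2) (x, y) (v, 0) := by
  have hcomp : HasFDerivAt (fun x' => Φ x' y) _ x :=
    h.hasFDerivAt.comp (f := fun x' => (x', y)) x (hasFDerivAt_prodMk_left x y)
  simp [hcomp.fderiv]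

lemma fderiv_partial_right_apply
    (h : DifferentiableAt 𝕜 (fun p : E₁ × E₂ => Φ p.1 p.2) (x, y)) (w : E₂) :
    fderiv 𝕜 (Φ x) y w = fderiv 𝕜 (fun p : E₁ × E₂ => Φ p.1 p.2) (x, y) (0, w) := by
  have hcomp : HasFDerivAt (Φ x) _ y :=
    h.hasFDerivAt.comp (f := fun y' => (x, y')) y (hasFDerivAt_prodMk_right x y)
  simp [hcomp.fderiv]

lemma fderiv_partial_comm [IsRCLikeNormedField 𝕜]
    (h : ContDiffAt 𝕜 2 (fun p : E₁ × E₂ => Φ p.1 p.2) (x, y)) (v : E₁) (w : E₂) :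
    fderiv 𝕜 (fun x' => fderiv 𝕜 (Φ x') y w) x v
      = fderiv 𝕜 (fun y' => fderiv 𝕜 (fun x' => Φ x' y') x v) y w := by
  set g : E₁ × E₂ → G := fun p => Φ p.1 p.2
  have hnear : ∀ᶠ p in 𝓝 (x, y), DifferentiableAt 𝕜 g p :=
    (h.eventually (by simp)).mono fun p hp => hp.differentiableAt (by simp)
  have hleft : (fun x' => fderiv 𝕜 (Φ x') y w) =ᶠ[𝓝 x] fun x' => fderiv 𝕜 g (x', y) (0, w) :=
    ((Continuous.prodMk_left y).tendsto x).eventually hnear |>.mono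
      fun _ hx' => fderiv_partial_right_apply hx' w
  have hright : (fun y' => fderiv 𝕜 (fun x' => Φ x' y') x v)
      =ᶠ[𝓝 y] fun y' => fderiv 𝕜 g (x, y') (v, 0) :=
    ((Continuous.prodMk_right x).tendsto y).eventually hnear |>.mono
      fun _ hy' => fderiv_partial_left_apply hy' v
  have hg' : DifferentiableAt 𝕜 (fderiv 𝕜 g) (x, y) :=
    (h.fderiv_right (m := 1) (by norm_num)).differentiableAt (by simp)
  have happly (k : E₁ × E₂) : DifferentiableAt 𝕜 (fun p => fderiv 𝕜 g p k) (x, y) :=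
    hg'.clm_apply (differentiableAt_const k)
  rw [hleft.fderiv_eq, hright.fderiv_eq,
    fderiv_partial_left_apply (Φ := fun x' y' => fderiv 𝕜 g (x', y') (0, w)) (happly _),
    fderiv_partial_right_apply (Φ := fun x' y' => fderiv 𝕜 g (x', y') (v, 0)) (happly _)]
  simp only [Prod.mk.eta]
  rw [fderiv_clm_apply hg' (differentiableAt_const _),
    fderiv_clm_apply hg' (differentiableAt_const _)]
  simpa using (h.isSymmSndFDerivAt (by simp)).eq (v, 0) (0, w)

end PartialDerivatives

section HolomorphicFamily

variable {E G : Type*} [NormedAddCommGroup E] [NormedSpace ℝ E] [NormedAddCommGroup G]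
  [NormedSpace ℂ G] {Φ : E → ℂ → G} {x : E} {y : ℂ} {s : Set E} {t : Set ℂ}

lemma contDiffOn_fderiv_of_holomorphic {n : WithTop ℕ∞} (hs : IsOpen s) (ht : IsOpen t)
    (hΦ : ContDiffOn ℝ (n + 1) (fun p : E × ℂ => Φ p.1 p.2) (s ×ˢ t))
    (hhol : ∀ x ∈ s, DifferentiableOn ℂ (Φ x) t) (hy : y ∈ t) (w : ℂ) :
    ContDiffOn ℝ n (fun x => fderiv ℂ (Φ x) y w) s := by
  intro x hx
  have hreal : ContDiffAt ℝ n (fun x' => fderiv ℝ (Φ x') y w) x :=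
    ((hΦ.contDiffAt ((hs.prod ht).mem_nhds ⟨hx, hy⟩)).fderiv contDiffAt_const le_rfl).clm_apply
      contDiffAt_const
  exact hreal.contDiffWithinAt.congr_of_mem (fun x' hx' => (DFunLike.congr_fun
    (((hhol x' hx').differentiableAt (ht.mem_nhds hy)).fderiv_restrictScalars ℝ) w).symm) hx

lemma fderiv_fderiv_comm_of_holomorphic
    (hΦ : ContDiffAt ℝ 2 (fun p : E × ℂ => Φ p.1 p.2) (x, y))
    (hhol : ∀ᶠ x' in 𝓝 x, DifferentiableAt ℂ (Φ x') y) {Ψ : ℂ → G} {v : E}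
    (hΨ : DifferentiableAt ℂ Ψ y) (heq : (fun y' => fderiv ℝ (fun x' => Φ x' y') x v) =ᶠ[𝓝 y] Ψ)
    (w : ℂ) :
    fderiv ℝ (fun x' => fderiv ℂ (Φ x') y w) x v = fderiv ℂ Ψ y w := by
  have hreal : (fun x' => fderiv ℂ (Φ x') y w) =ᶠ[𝓝 x] fun x' => fderiv ℝ (Φ x') y w :=
    hhol.mono fun x' hx' => (DFunLike.congr_fun (hx'.fderiv_restrictScalars ℝ) w).symm
  rw [hreal.fderiv_eq, fderiv_partial_comm hΦ, heq.fderiv_eq, hΨ.fderiv_restrictScalars ℝ]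
  rfl

end HolomorphicFamily

section Determinant

variable {𝕜 n : Type*} [NontriviallyNormedField 𝕜] [Fintype n] [DecidableEq n]

lemma hasDerivAt_matrix_det {A : 𝕜 → Matrix n n 𝕜} {A' : Matrix n n 𝕜} {t : 𝕜}
    (hA : HasDerivAt A A' t) :
    HasDerivAt (fun s => (A s).det) (A' * (A t).adjugate).trace t := by
  let detRows : ContinuousMultilinearMap 𝕜 (fun _ : n => n → 𝕜) 𝕜 :=
    ⟨Matrix.detRowAlternating.toMultilinearMap, continuous_id.matrix_det⟩
  have hrow (i : n) : (A' * (A t).adjugate) i i = ((A t).updateRow i (A' i)).det := by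
    rw [← Matrix.cramer_transpose_apply, Matrix.cramer_eq_adjugate_mulVec,
      ← Matrix.adjugate_transpose, Matrix.mulVec_transpose]
    rfl
  have htrace : (A' * (A t).adjugate).trace = detRows.linearDeriv (A t) A' :=
    (Finset.sum_congr rfl fun i _ => hrow i).trans (detRows.linearDeriv_apply (A t) A').symm
  rw [htrace]
  exact (detRows.hasFDerivAt (A t)).comp_hasDerivAt t hA

end Determinant

section Unitary

variable {A : Type*} [NormedRing A] [StarRing A] [ContinuousStar A]

lemma deriv_mul_star_mem_skewAdjoint [NormedAlgebra ℝ A] [StarModule ℝ A] {γ : ℝ → A} {γ' : A}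
    {t : ℝ} (hγ : HasDerivAt γ γ' t) (hunitary : ∀ᶠ s in 𝓝 t, γ s ∈ unitary A) :
    γ' * star (γ t) ∈ skewAdjoint A := by
  have hconst : (fun s => γ s * star (γ s)) =ᶠ[𝓝 t] fun _ => 1 :=
    hunitary.mono fun s hs => Unitary.mul_star_self_of_mem hs
  have hsum := (hγ.mul hγ.star).unique ((hasDerivAt_const t (1 : A)).congr_of_eventuallyEq hconst)
  rw [skewAdjoint.mem_iff, star_mul, star_star]
  exact eq_neg_of_add_eq_zero_right hsum

lemma circle_deriv_mul_star_mem_skewAdjoint [NormedAlgebra ℂ A] [StarModule ℂ A] {G : ℂ → A}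
    {G' : A} {l : ℂ} (hG : HasDerivAt G G' l)
    (hunitary : ∀ᶠ m in 𝓝 l, ‖m‖ = ‖l‖ → G m ∈ unitary A) :
    (I * l) • G' * star (G l) ∈ skewAdjoint A := by
  have hbase : circleMap 0 ‖l‖ l.arg = l := by simp [circleMap]
  have hcircle : HasDerivAt (circleMap 0 ‖l‖) (I * l) l.arg := by
    simpa only [hbase, mul_comm I] using hasDerivAt_circleMap 0 ‖l‖ l.arg
  have hcurve : HasDerivAt (G ∘ circleMap 0 ‖l‖) ((I * l) • G') l.arg :=
    HasDerivAt.scomp l.arg (hbase.symm ▸ hG) hcircle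
  have hnear := (continuous_circleMap 0 ‖l‖).tendsto l.arg |>.eventually (hbase.symm ▸ hunitary)
  simpa [hbase] using deriv_mul_star_mem_skewAdjoint hcurve
    (hnear.mono fun θ hθ => hθ (by simp))

end Unitary

lemma ip_comm (X Y : M2) : ip X Y = ip Y X := by
  rw [ip, ip, Matrix.trace_mul_comm]

lemma ip_add_left (X Y Z : M2) : ip (X + Y) Z = ip X Z + ip Y Z := by
  simp only [ip, add_mul, Matrix.trace_add, mul_add]

lemma ip_sub_left (X Y Z : M2) : ip (X - Y) Z = ip X Z - ip Y Z := by
  simp only [ip, sub_mul, Matrix.trace_sub, mul_sub]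

lemma ip_smul_left (c : ℂ) (X Y : M2) : ip (c • X) Y = c * ip X Y := by
  simp only [ip, smul_mul_assoc, Matrix.trace_smul, smul_eq_mul]
  ring

lemma ip_conj {F : M2} (hF : IsUnit F.det) (X Y : M2) :
    ip (F * X * F⁻¹) (F * Y * F⁻¹) = ip X Y := by
  have hmul : F * X * F⁻¹ * (F * Y * F⁻¹) = F * (X * Y) * F⁻¹ := by
    simp only [mul_assoc, Matrix.nonsing_inv_mul_cancel_left F _ hF]
  rw [ip, ip, hmul, Matrix.trace_mul_comm, Matrix.nonsing_inv_mul_cancel_left F _ hF]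

lemma mul_conj_mul_inv {n R : Type*} [Fintype n] [DecidableEq n] [CommRing R]
    (F T X : Matrix n n R) : F * T * X * (F * T)⁻¹ = F * (T * X * T⁻¹) * F⁻¹ := by
  simp only [Matrix.mul_inv_rev, mul_assoc]

lemma fderiv_apply_eq_dz_add_dzb (f : ℂ → M2) (z v : ℂ) :
    fderiv ℝ f z v = v • dz f z + conj v • dzb f z := by
  have hreal : fderiv ℝ f z v = (v.re : ℂ) • px f z + (v.im : ℂ) • py f z := by
    have hv : v = v.re • (1 : ℂ) + v.im • I := by simp
    conv_lhs => rw [hv, map_add, map_smul, map_smul]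
    rw [← Complex.coe_algebraMap, algebraMap_smul, algebraMap_smul, px, py]
  rw [hreal, dz, dzb, Complex.re_eq_add_conj, Complex.im_eq_sub_conj]
  match_scalars
  · ring
  · field_simp
    linear_combination (v - conj v) * I_sq

lemma dz_dz_eq {f : ℂ → M2} {z : ℂ} (hf : ContDiffAt ℝ 2 f z) :
    dz (dz f) z
      = (4 : ℂ)⁻¹ • (px (px f) z - py (py f) z - I • (px (py f) z + py (px f) z)) := by
  have hf' : DifferentiableAt ℝ (fderiv ℝ f) z :=
    (hf.fderiv_right (m := 1) (by norm_num)).differentiableAt (by simp)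
  have hx : DifferentiableAt ℝ (px f) z := hf'.clm_apply (differentiableAt_const 1)
  have hy : DifferentiableAt ℝ (py f) z := hf'.clm_apply (differentiableAt_const I)
  have hderiv (v : ℂ) : fderiv ℝ (dz f) z v
      = (2 : ℂ)⁻¹ • (fderiv ℝ (px f) z v - I • fderiv ℝ (py f) z v) := by
    have h := (hx.hasFDerivAt.fun_sub (hy.hasFDerivAt.fun_const_smul I)).fun_const_smul (2 : ℂ)⁻¹
    exact DFunLike.congr_fun h.fderiv v
  rw [dz, px, py, hderiv, hderiv]
  simp only [px, py]
  match_scalars <;> first | linear_combination 4⁻¹ * I_sq | ring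

/-- The coefficient `Û(λ)` of the extended frame equation `F̂⁻¹ ∂_z F̂ = Û(λ)`. -/
def laxU (H : ℝ) (u : ℂ → ℝ) (Q : ℂ → ℂ) (z l : ℂ) : M2 :=
  (2 : ℂ)⁻¹ • !![dzR u z, -2 * (H : ℂ) * (Real.exp (u z) : ℂ) * l⁻¹;
    Q z * (Real.exp (-(u z)) : ℂ) * l⁻¹, -(dzR u z)]

/-- The coefficient `V̂(λ)` of the extended frame equation `F̂⁻¹ ∂_z̄ F̂ = V̂(λ)`. -/
def laxV (H : ℝ) (u : ℂ → ℝ) (Q : ℂ → ℂ) (z l : ℂ) : M2 :=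
  (2 : ℂ)⁻¹ • !![-(dzbR u z), -(conj (Q z)) * (Real.exp (-(u z)) : ℂ) * l;
    2 * (H : ℂ) * (Real.exp (u z) : ℂ) * l, dzbR u z]

/-- The Maurer–Cartan form `F̂⁻¹ dF̂ = Û dz + V̂ dz̄` evaluated on the tangent vector `v`. -/
def maurerCartan (H : ℝ) (u : ℂ → ℝ) (Q : ℂ → ℂ) (z l v : ℂ) : M2 :=
  v • laxU H u Q z l + conj v • laxV H u Q z l

/-- The derivative of `maurerCartan` in the spectral parameter. -/
def maurerCartanDeriv (H : ℝ) (u : ℂ → ℝ) (Q : ℂ → ℂ) (z l v : ℂ) : M2 :=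
  (2 : ℂ)⁻¹ •
    !![0, 2 * v * H * Real.exp (u z) * l⁻¹ ^ 2 - conj v * conj (Q z) * Real.exp (-(u z));
      -v * Q z * Real.exp (-(u z)) * l⁻¹ ^ 2 + 2 * conj v * H * Real.exp (u z), 0]

/-- The matrix `K` with `df(v) = e^u F̂ K F̂⁻¹` for the Sym–Bobenko surface `f` at `λ = l`. At
`l = 1` the directions `1` and `i` give `2 e₁` and `2 e₂`. -/
def tangentMatrix (l v : ℂ) : M2 :=
  !![0, -2 * I * v * l⁻¹; -2 * I * conj v * l, 0]

section LaxPair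

variable (H : ℝ) (u : ℂ → ℝ) (Q : ℂ → ℂ) (z v w : ℂ) {l : ℂ}

lemma maurerCartan_eq_of (l : ℂ) :
    maurerCartan H u Q z l v
      = !![2⁻¹ * (v * dzR u z - conj v * dzbR u z),
          -v * H * Real.exp (u z) * l⁻¹ - 2⁻¹ * conj v * conj (Q z) * Real.exp (-(u z)) * l;
        2⁻¹ * v * Q z * Real.exp (-(u z)) * l⁻¹ + conj v * H * Real.exp (u z) * l,
          2⁻¹ * (conj v * dzbR u z - v * dzR u z)] := by
  ext i j
  fin_cases i <;> fin_cases j <;> simp [maurerCartan, laxU, laxV] <;> ring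

lemma hasDerivAt_maurerCartan (hl : l ≠ 0) :
    HasDerivAt (fun m => maurerCartan H u Q z m v) (maurerCartanDeriv H u Q z l v) l := by
  let diagonal : M2 := (v * dzR u z - conj v * dzbR u z) • !![2⁻¹, 0; 0, -2⁻¹]
  let coeffInv : M2 := v • !![0, -(H : ℂ) * Real.exp (u z); 2⁻¹ * Q z * Real.exp (-(u z)), 0]
  let coeff : M2 := conj v • !![0, -2⁻¹ * conj (Q z) * Real.exp (-(u z)); H * Real.exp (u z), 0]
  have hlaurent : (fun m => maurerCartan H u Q z m v)
      = fun m => diagonal + m⁻¹ • coeffInv + m • coeff := by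
    ext m i j
    fin_cases i <;> fin_cases j <;>
      simp [maurerCartan_eq_of, diagonal, coeffInv, coeff] <;> ring
  have hderiv : maurerCartanDeriv H u Q z l v = (-(l ^ 2)⁻¹) • coeffInv + (1 : ℂ) • coeff := by
    ext i j
    fin_cases i <;> fin_cases j <;> simp [maurerCartanDeriv, coeffInv, coeff] <;> ring
  rw [hlaurent, hderiv]
  exact (((hasDerivAt_inv hl).smul_const coeffInv).const_add diagonal).add
    ((hasDerivAt_id l).smul_const coeff)

-- The Sym term `2iλ ∂_λ` cancels the `Q`-terms of the commutator and doubles the `H`-terms.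
lemma maurerCartan_lie_e3_add_deriv (hl : l ≠ 0) :
    maurerCartan H u Q z l v * e3 - e3 * maurerCartan H u Q z l v
        + (2 * I * l) • maurerCartanDeriv H u Q z l v
      = (-(2 * (H : ℂ)) * Real.exp (u z)) • tangentMatrix l v := by
  ext i j
  fin_cases i <;> fin_cases j <;>
    simp [maurerCartan_eq_of, maurerCartanDeriv, tangentMatrix, e3] <;> field_simp <;> ring

lemma ip_tangentMatrix (hl : l ≠ 0) :
    ip (tangentMatrix l v) (tangentMatrix l w) = 2 * (v * conj w + conj v * w) := by
  simp only [ip, tangentMatrix, Matrix.mul_fin_two, Matrix.trace_fin_two_of]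
  field_simp
  linear_combination -4 * (v * conj w + conj v * w) * I_sq

lemma ip_tangentMatrix_e3 : ip (tangentMatrix l v) e3 = 0 := by
  simp [ip, tangentMatrix, e3]

lemma ip_maurerCartan_lie_tangentMatrix_e3 (hl : l ≠ 0) :
    ip (maurerCartan H u Q z l w * tangentMatrix l v - tangentMatrix l v * maurerCartan H u Q z l w)
        e3
      = 2 * H * Real.exp (u z) * (v * conj w + conj v * w)
        + Real.exp (-(u z)) * (l⁻¹ ^ 2 * Q z * v * w + l ^ 2 * conj (Q z) * conj v * conj w) := by
  rw [ip_sub_left]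
  simp only [ip, maurerCartan_eq_of, tangentMatrix, e3, Matrix.mul_fin_two,
    Matrix.trace_fin_two_of]
  field_simp
  ring_nf
  simp only [I_sq]
  ring

end LaxPair

lemma exists_specialUnitary_conj_eq_tangentMatrix {l : ℂ} (hl : ‖l‖ = 1) :
    ∃ T ∈ Matrix.specialUnitaryGroup (Fin 2) ℂ,
      T * e1 * T⁻¹ = (2 : ℂ)⁻¹ • tangentMatrix l 1 ∧
      T * e2 * T⁻¹ = (2 : ℂ)⁻¹ • tangentMatrix l I ∧
      T * e3 * T⁻¹ = e3 := by
  obtain ⟨s, hs⟩ : ∃ s : ℂ, s ^ 2 = l⁻¹ := IsAlgClosed.exists_pow_nat_eq _ (by norm_num)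
  have hnorm : ‖s‖ = 1 := by
    rw [← pow_eq_one_iff_of_nonneg (norm_nonneg s) two_ne_zero, ← norm_pow, hs, norm_inv, hl,
      inv_one]
  have hs0 : s ≠ 0 := norm_ne_zero_iff.1 (hnorm ▸ one_ne_zero)
  have hl_eq : l = (s ^ 2)⁻¹ := by rw [hs, inv_inv]
  have hconj : conj s = s⁻¹ := by rw [Complex.inv_eq_conj hnorm]
  let T : M2 := !![s, 0; 0, s⁻¹]
  have hdet : T.det = 1 := by simp [T, hs0]
  have hinv : T⁻¹ = !![s⁻¹, 0; 0, s] := by simp [Matrix.inv_def, hdet, T]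
  have hunitary : star T * T = 1 := by
    rw [Matrix.star_eq_conjTranspose]
    ext i j
    fin_cases i <;> fin_cases j <;>
      simp [T, Matrix.mul_apply, hconj, hs0]
  refine ⟨T, Matrix.mem_specialUnitaryGroup_iff.2
    ⟨Matrix.mem_unitaryGroup_iff'.2 hunitary, hdet⟩, ?_, ?_, ?_⟩ <;>
  · rw [hinv]
    ext i j
    fin_cases i <;> fin_cases j <;>
      simp [T, e1, e2, e3, tangentMatrix, hl_eq] <;> field_simp <;> simp

/-- `Fh` is an extended frame over `S` for the data `H`, `u`, `Q`: a unimodular matrix function of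
the point `z ∈ S` and the spectral parameter `l ∈ Λ`, unitary on the unit circle, with
Maurer–Cartan form `Û dz + V̂ dz̄`. The spectral domain `Λ` may be any open set missing `0`, such
as an annulus around the unit circle. -/
structure IsExtendedFrame (S Λ : Set ℂ) (H : ℝ) (u : ℂ → ℝ) (Q : ℂ → ℂ) (Fh : ℂ → ℂ → M2) :
    Prop where
  isOpen_domain : IsOpen S
  isOpen_spectral : IsOpen Λ
  spectral_ne_zero : ∀ l ∈ Λ, l ≠ 0
  differentiableOn_u : DifferentiableOn ℝ u S
  contDiffOn_uncurry : ContDiffOn ℝ (⊤ : ℕ∞) (fun p : ℂ × ℂ => Fh p.1 p.2) (S ×ˢ Λ)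
  holomorphicOn : ∀ z ∈ S, DifferentiableOn ℂ (Fh z) Λ
  det_eq_one : ∀ z ∈ S, ∀ l ∈ Λ, (Fh z l).det = 1
  star_mul_self : ∀ z ∈ S, ∀ l ∈ Λ, ‖l‖ = 1 → (Fh z l)ᴴ * Fh z l = 1
  inv_mul_dz : ∀ z ∈ S, ∀ l ∈ Λ, (Fh z l)⁻¹ * dz (fun w => Fh w l) z = laxU H u Q z l
  inv_mul_dzb : ∀ z ∈ S, ∀ l ∈ Λ, (Fh z l)⁻¹ * dzb (fun w => Fh w l) z = laxV H u Q z l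

namespace IsExtendedFrame

variable {S Λ : Set ℂ} {H : ℝ} {u : ℂ → ℝ} {Q : ℂ → ℂ} {Fh : ℂ → ℂ → M2} {z l : ℂ}

lemma isUnit_det (h : IsExtendedFrame S Λ H u Q Fh) (hz : z ∈ S) (hl : l ∈ Λ) :
    IsUnit (Fh z l).det :=
  h.det_eq_one z hz l hl ▸ isUnit_one

lemma isUnit_frame (h : IsExtendedFrame S Λ H u Q Fh) (hz : z ∈ S) (hl : l ∈ Λ) :
    IsUnit (Fh z l) :=
  (Matrix.isUnit_iff_isUnit_det _).2 (h.isUnit_det hz hl)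

lemma differentiableAt_spectral (h : IsExtendedFrame S Λ H u Q Fh) (hz : z ∈ S) (hl : l ∈ Λ) :
    DifferentiableAt ℂ (Fh z) l :=
  (h.holomorphicOn z hz).differentiableAt (h.isOpen_spectral.mem_nhds hl)

lemma contDiffOn_frame (h : IsExtendedFrame S Λ H u Q Fh) (hl : l ∈ Λ) :
    ContDiffOn ℝ (⊤ : ℕ∞) (fun z => Fh z l) S :=
  h.contDiffOn_uncurry.comp (contDiffOn_id.prodMk contDiffOn_const) fun _ hz => ⟨hz, hl⟩

lemma contDiffOn_fderiv_spectral (h : IsExtendedFrame S Λ H u Q Fh) (hl : l ∈ Λ) :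
    ContDiffOn ℝ (⊤ : ℕ∞) (fun z => fderiv ℂ (Fh z) l 1) S :=
  contDiffOn_fderiv_of_holomorphic h.isOpen_domain h.isOpen_spectral h.contDiffOn_uncurry
    h.holomorphicOn hl 1

lemma differentiableAt_frame (h : IsExtendedFrame S Λ H u Q Fh) (hz : z ∈ S) (hl : l ∈ Λ) :
    DifferentiableAt ℝ (fun w => Fh w l) z :=
  ((h.contDiffOn_frame hl).differentiableOn (by simp)).differentiableAt
    (h.isOpen_domain.mem_nhds hz)

lemma differentiableAt_fderiv_spectral (h : IsExtendedFrame S Λ H u Q Fh) (hz : z ∈ S)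
    (hl : l ∈ Λ) : DifferentiableAt ℝ (fun w => fderiv ℂ (Fh w) l 1) z :=
  ((h.contDiffOn_fderiv_spectral hl).differentiableOn (by simp)).differentiableAt
    (h.isOpen_domain.mem_nhds hz)

lemma fderiv_frame (h : IsExtendedFrame S Λ H u Q Fh) (hz : z ∈ S) (hl : l ∈ Λ) (v : ℂ) :
    fderiv ℝ (fun w => Fh w l) z v = Fh z l * maurerCartan H u Q z l v := by
  rw [fderiv_apply_eq_dz_add_dzb, maurerCartan, ← h.inv_mul_dz z hz l hl,
    ← h.inv_mul_dzb z hz l hl, mul_add, mul_smul_comm, mul_smul_comm,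
    Matrix.mul_nonsing_inv_cancel_left _ _ (h.isUnit_det hz hl),
    Matrix.mul_nonsing_inv_cancel_left _ _ (h.isUnit_det hz hl)]

lemma fderiv_fderiv_spectral (h : IsExtendedFrame S Λ H u Q Fh) (hz : z ∈ S) (hl : l ∈ Λ)
    (v : ℂ) :
    fderiv ℝ (fun w => fderiv ℂ (Fh w) l 1) z v
      = fderiv ℂ (Fh z) l 1 * maurerCartan H u Q z l v
        + Fh z l * maurerCartanDeriv H u Q z l v := by
  have hsmooth : ContDiffAt ℝ 2 (fun p : ℂ × ℂ => Fh p.1 p.2) (z, l) :=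
    (h.contDiffOn_uncurry.contDiffAt ((h.isOpen_domain.prod h.isOpen_spectral).mem_nhds
      ⟨hz, hl⟩)).of_le (WithTop.coe_le_coe.2 le_top)
  have hhol : ∀ᶠ w in 𝓝 z, DifferentiableAt ℂ (Fh w) l :=
    Filter.eventually_of_mem (h.isOpen_domain.mem_nhds hz) fun w hw =>
      h.differentiableAt_spectral hw hl
  have hframe : (fun m => fderiv ℝ (fun w => Fh w m) z v)
      =ᶠ[𝓝 l] fun m => Fh z m * maurerCartan H u Q z m v :=
    Filter.eventually_of_mem (h.isOpen_spectral.mem_nhds hl) fun m hm => h.fderiv_frame hz hm v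
  have hprod : HasDerivAt (fun m => Fh z m * maurerCartan H u Q z m v)
      (fderiv ℂ (Fh z) l 1 * maurerCartan H u Q z l v
        + Fh z l * maurerCartanDeriv H u Q z l v) l :=
    (h.differentiableAt_spectral hz hl).hasFDerivAt.hasDerivAt.mul
      (hasDerivAt_maurerCartan H u Q z v (h.spectral_ne_zero l hl))
  exact (fderiv_fderiv_comm_of_holomorphic hsmooth hhol hprod.differentiableAt hframe 1).trans
    hprod.deriv

lemma contDiffOn_inv_frame (h : IsExtendedFrame S Λ H u Q Fh) (hl : l ∈ Λ) :
    ContDiffOn ℝ (⊤ : ℕ∞) (fun z => (Fh z l)⁻¹) S := by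
  simp only [Matrix.nonsing_inv_eq_ringInverse]
  exact contDiffOn_ringInverse_comp (h.contDiffOn_frame hl) fun z hz => h.isUnit_frame hz hl

lemma contDiffOn_symB (h : IsExtendedFrame S Λ H u Q Fh) (hl : l ∈ Λ) :
    ContDiffOn ℝ (⊤ : ℕ∞) (fun z => symB H (Fh z) l) S := by
  have hconj := ((h.contDiffOn_frame hl).mul (contDiffOn_const (c := e3))).mul
    (h.contDiffOn_inv_frame hl)
  have hlog := (h.contDiffOn_fderiv_spectral hl).mul (h.contDiffOn_inv_frame hl)
  exact (hconj.add (hlog.const_smul (2 * I * l))).const_smul (-(2 * (H : ℂ))⁻¹)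

lemma fderiv_symB (h : IsExtendedFrame S Λ H u Q Fh) (hH : H ≠ 0) (hz : z ∈ S) (hl : l ∈ Λ)
    (v : ℂ) :
    fderiv ℝ (fun w => symB H (Fh w) l) z v
      = Fh z l * ((Real.exp (u z) : ℂ) • tangentMatrix l v) * (Fh z l)⁻¹ := by
  have hH' : (H : ℂ) ≠ 0 := ofReal_ne_zero.2 hH
  have hcoeff : -(2 * (H : ℂ))⁻¹ * (-(2 * (H : ℂ)) * Real.exp (u z)) = Real.exp (u z) := by
    field_simp
  have hderiv := fderiv_conj_add_smul_mul_ringInverse_apply (h.differentiableAt_frame hz hl)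
    (h.differentiableAt_fderiv_spectral hz hl) (h.isUnit_frame hz hl) (h.fderiv_frame hz hl v)
    (h.fderiv_fderiv_spectral hz hl v) e3 (2 * I * l) (-(2 * (H : ℂ))⁻¹)
  rw [maurerCartan_lie_e3_add_deriv H u Q z v (h.spectral_ne_zero l hl), smul_smul, hcoeff]
    at hderiv
  simp only [symB, Matrix.nonsing_inv_eq_ringInverse]
  exact hderiv

lemma exists_fderiv_fderiv_symB_eq (h : IsExtendedFrame S Λ H u Q Fh) (hH : H ≠ 0) (hz : z ∈ S)
    (hl : l ∈ Λ) (v w : ℂ) :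
    ∃ c : ℂ, fderiv ℝ (fun y => fderiv ℝ (fun w => symB H (Fh w) l) y v) z w
      = Fh z l * ((Real.exp (u z) : ℂ) • (maurerCartan H u Q z l w * tangentMatrix l v
          - tangentMatrix l v * maurerCartan H u Q z l w) + c • tangentMatrix l v)
        * (Fh z l)⁻¹ := by
  have hnear : (fun y => fderiv ℝ (fun w => symB H (Fh w) l) y v) =ᶠ[𝓝 z]
      fun y => Fh y l * ((Real.exp (u y) : ℂ) • tangentMatrix l v) * (Fh y l)⁻¹ :=
    Filter.eventually_of_mem (h.isOpen_domain.mem_nhds hz) fun y hy => h.fderiv_symB hH hy hl v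
  have hexp : DifferentiableAt ℝ (fun y => (Real.exp (u y) : ℂ)) z :=
    Complex.ofRealCLM.differentiableAt.comp z
      (h.differentiableOn_u.differentiableAt (h.isOpen_domain.mem_nhds hz)).exp
  refine ⟨fderiv ℝ (fun y => (Real.exp (u y) : ℂ)) z w, ?_⟩
  rw [hnear.fderiv_eq]
  simp only [Matrix.nonsing_inv_eq_ringInverse]
  exact fderiv_conj_smul_ringInverse_apply hexp (h.differentiableAt_frame hz hl)
    (h.isUnit_frame hz hl) (h.fderiv_frame hz hl w) (tangentMatrix l v)

lemma ip_fderiv_symB (h : IsExtendedFrame S Λ H u Q Fh) (hH : H ≠ 0) (hz : z ∈ S) (hl : l ∈ Λ)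
    (v w : ℂ) :
    ip (fderiv ℝ (fun y => symB H (Fh y) l) z v) (fderiv ℝ (fun y => symB H (Fh y) l) z w)
      = 2 * Real.exp (2 * u z) * (v * conj w + conj v * w) := by
  rw [h.fderiv_symB hH hz hl, h.fderiv_symB hH hz hl, ip_conj (h.isUnit_det hz hl), ip_smul_left,
    ip_comm, ip_smul_left, ip_tangentMatrix w v (h.spectral_ne_zero l hl), two_mul (u z),
    Real.exp_add]
  push_cast
  ring

lemma ip_fderiv_fderiv_symB_normal (h : IsExtendedFrame S Λ H u Q Fh) (hH : H ≠ 0) (hz : z ∈ S)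
    (hl : l ∈ Λ) (v w : ℂ) :
    ip (fderiv ℝ (fun y => fderiv ℝ (fun y' => symB H (Fh y') l) y v) z w)
        (Fh z l * e3 * (Fh z l)⁻¹)
      = 2 * H * Real.exp (2 * u z) * (v * conj w + conj v * w)
        + (l⁻¹ ^ 2 * Q z * v * w + l ^ 2 * conj (Q z) * conj v * conj w) := by
  obtain ⟨c, hc⟩ := h.exists_fderiv_fderiv_symB_eq hH hz hl v w
  have hexp : (Real.exp (u z) : ℂ) * Real.exp (-(u z)) = 1 := by
    rw [← ofReal_mul, ← Real.exp_add, add_neg_cancel, Real.exp_zero, ofReal_one]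
  rw [hc, ip_conj (h.isUnit_det hz hl), ip_add_left, ip_smul_left, ip_smul_left,
    ip_tangentMatrix_e3, ip_maurerCartan_lie_tangentMatrix_e3 H u Q z v w (h.spectral_ne_zero l hl),
    two_mul (u z), Real.exp_add, ofReal_mul]
  linear_combination
    (l⁻¹ ^ 2 * Q z * v * w + l ^ 2 * conj (Q z) * conj v * conj w) * hexp

lemma ip_laplacian_symB_normal (h : IsExtendedFrame S Λ H u Q Fh) (hH : H ≠ 0) (hz : z ∈ S)
    (hl : l ∈ Λ) :
    ip (px (px (fun w => symB H (Fh w) l)) z + py (py (fun w => symB H (Fh w) l)) z)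
        (Fh z l * e3 * (Fh z l)⁻¹)
      = 8 * Real.exp (2 * u z) * H := by
  unfold px py
  rw [ip_add_left, h.ip_fderiv_fderiv_symB_normal hH hz hl, h.ip_fderiv_fderiv_symB_normal hH hz hl,
    map_one, conj_I]
  linear_combination (- 4 * H * Real.exp (2 * u z) + l⁻¹ ^ 2 * Q z + l ^ 2 * conj (Q z)) * I_sq

lemma ip_normal_dz_dz_symB (h : IsExtendedFrame S Λ H u Q Fh) (hH : H ≠ 0) (hz : z ∈ S)
    (hl : l ∈ Λ) :
    ip (Fh z l * e3 * (Fh z l)⁻¹) (dz (dz (fun w => symB H (Fh w) l)) z) = l⁻¹ ^ 2 * Q z := by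
  have hsmooth : ContDiffAt ℝ 2 (fun w => symB H (Fh w) l) z :=
    ((h.contDiffOn_symB hl).contDiffAt (h.isOpen_domain.mem_nhds hz)).of_le
      (WithTop.coe_le_coe.2 le_top)
  rw [ip_comm, dz_dz_eq hsmooth, ip_smul_left, ip_sub_left, ip_sub_left, ip_smul_left, ip_add_left]
  unfold px py
  simp only [h.ip_fderiv_fderiv_symB_normal hH hz hl, map_one, conj_I]
  linear_combination
    4⁻¹ * (4 * H * Real.exp (2 * u z) - 3 * l⁻¹ ^ 2 * Q z + l ^ 2 * conj (Q z)) * I_sq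

lemma mem_unitary (h : IsExtendedFrame S Λ H u Q Fh) (hz : z ∈ S) (hl : l ∈ Λ) (hnorm : ‖l‖ = 1) :
    Fh z l ∈ unitary M2 :=
  Matrix.mem_unitaryGroup_iff'.2 (h.star_mul_self z hz l hl hnorm)

lemma conjTranspose_symB (h : IsExtendedFrame S Λ H u Q Fh) (hz : z ∈ S) (hl : l ∈ Λ)
    (hnorm : ‖l‖ = 1) : (symB H (Fh z) l)ᴴ = -symB H (Fh z) l := by
  have hinv : (Fh z l)⁻¹ = star (Fh z l) :=
    Matrix.inv_eq_left_inv (h.star_mul_self z hz l hl hnorm)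
  have he3 : e3 ∈ skewAdjoint M2 := by
    rw [skewAdjoint.mem_iff, Matrix.star_eq_conjTranspose]
    ext i j
    fin_cases i <;> fin_cases j <;> simp [e3]
  have hconj : Fh z l * e3 * star (Fh z l) ∈ skewAdjoint M2 := skewAdjoint.conjugate he3 _
  -- The library instance is about the entrywise topology, not the one induced by the operator norm.
  have : @ContinuousStar M2 (PseudoMetricSpace.toUniformSpace (α := M2)).toTopologicalSpace _ :=
    ⟨continuous_id.matrix_conjTranspose⟩
  have hlog : (I * l) • fderiv ℂ (Fh z) l 1 * star (Fh z l) ∈ skewAdjoint M2 :=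
    circle_deriv_mul_star_mem_skewAdjoint (h.differentiableAt_spectral hz hl).hasFDerivAt.hasDerivAt
      (Filter.eventually_of_mem (h.isOpen_spectral.mem_nhds hl) fun m hm hm' =>
        h.mem_unitary hz hm (hm'.trans hnorm))
  have hmem : symB H (Fh z) l ∈ skewAdjoint M2 := by
    have hscalars : symB H (Fh z) l = (-(2 * H)⁻¹ : ℝ) • (Fh z l * e3 * star (Fh z l)
        + (2 : ℝ) • ((I * l) • fderiv ℂ (Fh z) l 1 * star (Fh z l))) := by
      rw [symB, hinv, smul_mul_assoc, ← Complex.coe_smul, ← Complex.coe_smul, smul_smul,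
        ← mul_assoc]
      push_cast
      rfl
    rw [hscalars]
    exact skewAdjoint.smul_mem _ (add_mem hconj (skewAdjoint.smul_mem _ hlog))
  exact skewAdjoint.mem_iff.1 hmem

lemma trace_symB (h : IsExtendedFrame S Λ H u Q Fh) (hz : z ∈ S) (hl : l ∈ Λ) :
    (symB H (Fh z) l).trace = 0 := by
  have hadj : (Fh z l)⁻¹ = (Fh z l).adjugate := by
    rw [Matrix.inv_def, h.det_eq_one z hz l hl, Ring.inverse_one, one_smul]
  have hdet : (fun m => (Fh z m).det) =ᶠ[𝓝 l] fun _ => 1 :=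
    Filter.eventually_of_mem (h.isOpen_spectral.mem_nhds hl) fun m hm => h.det_eq_one z hz m hm
  have hlog : (fderiv ℂ (Fh z) l 1 * (Fh z l)⁻¹).trace = 0 := by
    rw [hadj]
    exact (hasDerivAt_matrix_det
      (h.differentiableAt_spectral hz hl).hasFDerivAt.hasDerivAt).unique
        ((hasDerivAt_const l 1).congr_of_eventuallyEq hdet)
  have hconj : (Fh z l * e3 * (Fh z l)⁻¹).trace = 0 := by
    rw [Matrix.trace_mul_comm, Matrix.nonsing_inv_mul_cancel_left _ _ (h.isUnit_det hz hl)]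
    simp [e3]
  rw [symB, Matrix.trace_smul, Matrix.trace_add, Matrix.trace_smul, hconj, hlog, smul_zero,
    add_zero, smul_zero]

lemma inv_smul_fderiv_symB (h : IsExtendedFrame S Λ H u Q Fh) (hH : H ≠ 0) (hz : z ∈ S)
    (hl : l ∈ Λ) (v : ℂ) :
    (((2 * Real.exp (u z))⁻¹ : ℝ) : ℂ) • fderiv ℝ (fun w => symB H (Fh w) l) z v
      = Fh z l * ((2 : ℂ)⁻¹ • tangentMatrix l v) * (Fh z l)⁻¹ := by
  have hexp : (((2 * Real.exp (u z))⁻¹ : ℝ) : ℂ) * (Real.exp (u z) : ℂ) = (2 : ℂ)⁻¹ := by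
    rw [← ofReal_mul, mul_inv, inv_mul_cancel_right₀ (Real.exp_ne_zero _)]
    norm_num
  rw [h.fderiv_symB hH hz hl, ← smul_mul_assoc, ← mul_smul_comm, smul_smul, hexp]

lemma exists_adapted_frame (h : IsExtendedFrame S Λ H u Q Fh) (hH : H ≠ 0) (hl : l ∈ Λ)
    (hnorm : ‖l‖ = 1) :
    ∃ F : ℂ → M2, ContDiffOn ℝ (⊤ : ℕ∞) F S ∧
      ∀ z ∈ S, (F z)ᴴ * F z = 1 ∧ (F z).det = 1 ∧
        F z * e1 * (F z)⁻¹
          = (((2 * Real.exp (u z))⁻¹ : ℝ) : ℂ) • px (fun w => symB H (Fh w) l) z ∧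
        F z * e2 * (F z)⁻¹
          = (((2 * Real.exp (u z))⁻¹ : ℝ) : ℂ) • py (fun w => symB H (Fh w) l) z ∧
        F z * e3 * (F z)⁻¹ = Fh z l * e3 * (Fh z l)⁻¹ := by
  obtain ⟨T, hT, he1, he2, he3⟩ := exists_specialUnitary_conj_eq_tangentMatrix hnorm
  obtain ⟨hTunitary, hTdet⟩ := Matrix.mem_specialUnitaryGroup_iff.1 hT
  refine ⟨fun z => Fh z l * T, (h.contDiffOn_frame hl).mul contDiffOn_const, fun z hz => ?_⟩
  have hunitary : Fh z l * T ∈ Matrix.unitaryGroup (Fin 2) ℂ :=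
    mul_mem (h.mem_unitary hz hl hnorm) hTunitary
  refine ⟨Matrix.mem_unitaryGroup_iff'.1 hunitary, ?_, ?_, ?_, ?_⟩
  · rw [Matrix.det_mul, h.det_eq_one z hz l hl, hTdet, one_mul]
  · rw [mul_conj_mul_inv, he1, px, h.inv_smul_fderiv_symB hH hz hl]
  · rw [mul_conj_mul_inv, he2, py, h.inv_smul_fderiv_symB hH hz hl]
  · rw [mul_conj_mul_inv, he3]

end IsExtendedFrame

/-- `f` is a conformal immersion `S → su(2)` with conformal factor `e^u`, constant mean curvature
`H` and Hopf differential coefficient `q`. The unit normal `N = F e₃ F⁻¹` is the one oriented by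
`f_x` and `f_y`: a smooth `F : S → SU(2)` rotates `e₁`, `e₂`, `e₃` to the adapted orthonormal
frame. -/
structure IsConformalCMCImmersion (S : Set ℂ) (f : ℂ → M2) (u : ℂ → ℝ) (H : ℝ) (q : ℂ → ℂ) :
    Prop where
  contDiffOn : ContDiffOn ℝ (⊤ : ℕ∞) f S
  mem_su2 : ∀ z ∈ S, (f z)ᴴ = -(f z) ∧ (f z).trace = 0
  conformal : ∀ z ∈ S,
    ip (px f z) (px f z) = ((4 * Real.exp (2 * u z) : ℝ) : ℂ) ∧
    ip (py f z) (py f z) = ((4 * Real.exp (2 * u z) : ℝ) : ℂ) ∧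
    ip (px f z) (py f z) = 0
  exists_frame : ∃ F : ℂ → M2, ContDiffOn ℝ (⊤ : ℕ∞) F S ∧
    ∀ z ∈ S, (F z)ᴴ * F z = 1 ∧ (F z).det = 1 ∧
      F z * e1 * (F z)⁻¹ = (((2 * Real.exp (u z))⁻¹ : ℝ) : ℂ) • px f z ∧
      F z * e2 * (F z)⁻¹ = (((2 * Real.exp (u z))⁻¹ : ℝ) : ℂ) • py f z ∧
      ip (px (px f) z + py (py f) z) (F z * e3 * (F z)⁻¹)
        = ((8 * Real.exp (2 * u z) * H : ℝ) : ℂ) ∧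
      ip (F z * e3 * (F z)⁻¹) (dz (dz f) z) = q z

theorem sym_bobenko_produces_cmc_general {S Λ : Set ℂ} {H : ℝ} {u : ℂ → ℝ} {Q : ℂ → ℂ}
    {Fh : ℂ → ℂ → M2} (h : IsExtendedFrame S Λ H u Q Fh) (hH : H ≠ 0) {l₀ : ℂ} (hl₀ : l₀ ∈ Λ)
    (hnorm : ‖l₀‖ = 1) :
    IsConformalCMCImmersion S (fun z => symB H (Fh z) l₀) u H fun z => l₀⁻¹ ^ 2 * Q z where
  contDiffOn := h.contDiffOn_symB hl₀
  mem_su2 z hz := ⟨h.conjTranspose_symB hz hl₀ hnorm, h.trace_symB hz hl₀⟩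
  conformal z hz := by
    unfold px py
    simp only [h.ip_fderiv_symB hH hz hl₀, map_one, conj_I]
    refine ⟨?_, ?_, ?_⟩
    · push_cast
      ring
    · push_cast
      linear_combination -4 * cexp (2 * u z) * I_sq
    · ring
  exists_frame := by
    obtain ⟨F, hsmooth, hF⟩ := h.exists_adapted_frame hH hl₀ hnorm
    refine ⟨F, hsmooth, fun z hz => ?_⟩
    obtain ⟨hunitary, hdet, he1, he2, he3⟩ := hF z hz
    refine ⟨hunitary, hdet, he1, he2, ?_, ?_⟩
    · rw [he3, h.ip_laplacian_symB_normal hH hz hl₀]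
      push_cast
      rfl
    · rw [he3, h.ip_normal_dz_dz_symB hH hz hl₀]

/-- given a map `F̂` with Maurer–Cartan form of extended-frame type, for each
`λ₀` on the unit circle the Sym–Bobenko formula produces a conformal immersion with
conformal factor `e^u`, constant mean curvature `H` and Hopf coefficient `λ₀⁻² Q`. -/
theorem sym_bobenko_produces_cmc
    (S : Set ℂ) (hS : IsOpen S)
    (H : ℝ) (hH0 : H ≠ 0)
    (u : ℂ → ℝ) (Q : ℂ → ℂ)
    (hu : ContDiffOn ℝ (⊤ : ℕ∞) u S)
    (hQ : ContDiffOn ℝ (⊤ : ℕ∞) Q S)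
    (Fh : ℂ → ℂ → M2)
    (hFhsm : ContDiffOn ℝ (⊤ : ℕ∞) (fun p : ℂ × ℂ => Fh p.1 p.2) (S ×ˢ {l : ℂ | l ≠ 0}))
    (hFhhol : ∀ z ∈ S, DifferentiableOn ℂ (Fh z) {l : ℂ | l ≠ 0})
    (hFhdet : ∀ z ∈ S, ∀ l : ℂ, l ≠ 0 → (Fh z l).det = 1)
    (hFhunit : ∀ z ∈ S, ∀ l : ℂ, ‖l‖ = 1 → (Fh z l)ᴴ * Fh z l = 1)
    (hMCz : ∀ z ∈ S, ∀ l : ℂ, l ≠ 0 →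
      (Fh z l)⁻¹ * dz (fun w => Fh w l) z = (2:ℂ)⁻¹ •
        !![dzR u z, -2 * (H : ℂ) * (Real.exp (u z) : ℂ) * l⁻¹;
           Q z * (Real.exp (-(u z)) : ℂ) * l⁻¹, -(dzR u z)])
    (hMCzb : ∀ z ∈ S, ∀ l : ℂ, l ≠ 0 →
      (Fh z l)⁻¹ * dzb (fun w => Fh w l) z = (2:ℂ)⁻¹ •
        !![-(dzbR u z), -((starRingEnd ℂ) (Q z)) * (Real.exp (-(u z)) : ℂ) * l;
           2 * (H : ℂ) * (Real.exp (u z) : ℂ) * l, dzbR u z]) :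
    ∀ l₀ : ℂ, ‖l₀‖ = 1 →
      ContDiffOn ℝ (⊤ : ℕ∞) (fun z => symB H (Fh z) l₀) S ∧
      (∀ z ∈ S, ((symB H (Fh z) l₀)ᴴ = -(symB H (Fh z) l₀) ∧ (symB H (Fh z) l₀).trace = 0)) ∧
      (∀ z ∈ S,
        ip (px (fun w => symB H (Fh w) l₀) z) (px (fun w => symB H (Fh w) l₀) z)
          = ((4 * Real.exp (2 * u z) : ℝ) : ℂ) ∧
        ip (py (fun w => symB H (Fh w) l₀) z) (py (fun w => symB H (Fh w) l₀) z)
          = ((4 * Real.exp (2 * u z) : ℝ) : ℂ) ∧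
        ip (px (fun w => symB H (Fh w) l₀) z) (py (fun w => symB H (Fh w) l₀) z) = 0) ∧
      ∃ F : ℂ → M2, ContDiffOn ℝ (⊤ : ℕ∞) F S ∧
        ∀ z ∈ S, (F z)ᴴ * F z = 1 ∧ (F z).det = 1 ∧
          F z * e1 * (F z)⁻¹
            = (((2 * Real.exp (u z))⁻¹ : ℝ) : ℂ) • px (fun w => symB H (Fh w) l₀) z ∧
          F z * e2 * (F z)⁻¹
            = (((2 * Real.exp (u z))⁻¹ : ℝ) : ℂ) • py (fun w => symB H (Fh w) l₀) z ∧
          ip (px (px (fun w => symB H (Fh w) l₀)) z + py (py (fun w => symB H (Fh w) l₀)) z)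
              (F z * e3 * (F z)⁻¹)
            = ((8 * Real.exp (2 * u z) * H : ℝ) : ℂ) ∧
          ip (F z * e3 * (F z)⁻¹) (dz (dz (fun w => symB H (Fh w) l₀)) z)
            = l₀⁻¹ ^ 2 * Q z := by
  intro l₀ hl₀
  have hframe : IsExtendedFrame S {l | l ≠ 0} H u Q Fh := ⟨hS, isOpen_ne, fun _ => id,
    hu.differentiableOn (by simp), hFhsm, hFhhol, hFhdet, fun z hz l _ => hFhunit z hz l, hMCz,
    hMCzb⟩
  have hcmc := sym_bobenko_produces_cmc_general hframe hH0
    (norm_ne_zero_iff.1 (hl₀ ▸ one_ne_zero)) hl₀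
  exact ⟨hcmc.contDiffOn, hcmc.mem_su2, hcmc.conformal, hcmc.exists_frame⟩
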